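/- Let X and Y be complex Banach spaces, O ⊆ X open, u : O → Y holomorphic on O with sup_{x∈O} ‖u(x)‖_Y ≤ B, and K ⊆ O compact. Assume that for some 0 < p < 1 there exists a sequence (ψ_j)_{j≥1} of elements of X with (‖ψ_j‖_X)_{j≥1} ∈ ℓ_p(ℕ) such that K ⊆ Q := {Σ_{j≥1} z_j ψ_j : z = (z_j)_{j≥1} ∈ U}, where U is the unit polydisc of ℓ_∞(ℕ). Then Σ_{n≥1} [n^t d_n(u(K))_Y]^p n^{−1} < ∞, where t := 1/p − 1. -/

import Mathlib

/-- The Kolmogorov `n`-width of a subset `K` of a complex normed space `X`: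
the infimum over all `n`-dimensional subspaces `W` of `X` of the deviation
`sup_{v ∈ K} inf_{w ∈ W} ‖v - w‖`. -/
noncomputable def kolWidth {X : Type*} [NormedAddCommGroup X] [NormedSpace ℂ X]
    (n : ℕ) (K : Set X) : ℝ :=
  ⨅ W : {W : Submodule ℂ X // Module.finrank ℂ ↥W = n},
    ⨆ x : K, ⨅ w : ↥W.1, ‖(x : X) - (w : X)‖


section widths

open Module

variable {Y : Type*} [NormedAddCommGroup Y] [NormedSpace ℂ Y]

theorem exists_extend_finrank (V : Submodule ℂ Y) (n : ℕ) (hV : finrank ℂ V = n) (d : ℕ) :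
    ∀ W : Submodule ℂ Y, FiniteDimensional ℂ W → finrank ℂ W + d = n →
      ∃ W' : Submodule ℂ Y, W ≤ W' ∧ finrank ℂ W' = n := by
  induction d with
  | zero => intro W _ h; exact ⟨W, le_rfl, by simpa using h⟩
  | succ d ih =>
    intro W hW h
    have hne : ¬ V ≤ W := by
      intro hle
      have := Submodule.finrank_mono hle
      omega
    obtain ⟨v, hvV, hvW⟩ := SetLike.not_le_iff_exists.1 hne
    have hfin : FiniteDimensional ℂ (W ⊔ Submodule.span ℂ {v} : Submodule ℂ Y) := inferInstance
    have hlt : W < W ⊔ Submodule.span ℂ {v} := by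
      refine lt_of_le_of_ne le_sup_left ?_
      intro heq
      apply hvW
      rw [heq]
      exact Submodule.mem_sup_right (Submodule.mem_span_singleton_self v)
    have h1 := Submodule.finrank_lt_finrank_of_lt hlt
    have h2 := Submodule.finrank_add_le_finrank_add_finrank W (Submodule.span ℂ {v})
    have h3 := finrank_span_le_card (R := ℂ) ({v} : Set Y)
    simp at h3
    obtain ⟨W', hle, hW'⟩ := ih (W ⊔ Submodule.span ℂ {v}) hfin (by omega)
    exact ⟨W', le_sup_left.trans hle, hW'⟩

theorem kolWidth_nonneg (n : ℕ) (S : Set Y) : 0 ≤ kolWidth n S :=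
  Real.iInf_nonneg fun _ => Real.iSup_nonneg fun _ => Real.iInf_nonneg fun _ => norm_nonneg _

theorem kolWidth_le {n : ℕ} {S : Set Y} {ε : ℝ} (hε : 0 ≤ ε) (W : Submodule ℂ Y)
    (hWf : FiniteDimensional ℂ W) (hW : finrank ℂ W ≤ n)
    (h : ∀ x ∈ S, ∃ w ∈ W, ‖x - w‖ ≤ ε) : kolWidth n S ≤ ε := by
  by_cases hne : Nonempty {W : Submodule ℂ Y // finrank ℂ ↥W = n}
  · obtain ⟨V, hV⟩ := hne
    obtain ⟨W', hle, hW'⟩ := exists_extend_finrank V n hV (n - finrank ℂ W) W hWf (by omega)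
    refine (ciInf_le ⟨0, ?_⟩ ⟨W', hW'⟩).trans ?_
    · rintro _ ⟨W, rfl⟩
      exact Real.iSup_nonneg fun _ => Real.iInf_nonneg fun _ => norm_nonneg _
    · refine Real.iSup_le (fun x => ?_) hε
      obtain ⟨w, hw, hxw⟩ := h x x.2
      refine (ciInf_le ⟨0, ?_⟩ ⟨w, hle hw⟩).trans hxw
      rintro _ ⟨W, rfl⟩
      exact norm_nonneg _
  · rw [not_nonempty_iff] at hne
    unfold kolWidth
    rw [Real.iInf_of_isEmpty]
    exact hε

end widths

section sorting

open Filter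

/-- A positive sequence tending to zero has a decreasing rearrangement. -/
theorem exists_antitone_rearrangement (w : ℕ → ℝ) (hw : ∀ n, 0 < w n)
    (hlim : Tendsto w cofinite (nhds 0)) :
    ∃ e : ℕ ≃ ℕ, Antitone (w ∘ e) := by
  classical
  have hinv : Tendsto (fun n => (w n)⁻¹) cofinite atTop := by
    apply Tendsto.inv_tendsto_nhdsGT_zero
    rw [tendsto_nhdsWithin_iff]
    exact ⟨hlim, Eventually.of_forall hw⟩
  have key : ∀ s : Finset ℕ, ∃ a, a ∉ s ∧ ∀ b, b ∉ s → w b ≤ w a := by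
    intro s
    obtain ⟨a, ha, hmax⟩ := hinv.exists_within_forall_le (s := {x | x ∉ s})
      (Infinite.exists_notMem_finset s)
    refine ⟨a, ha, fun b hb => ?_⟩
    exact (inv_le_inv₀ (hw a) (hw b)).1 (hmax b hb)
  choose g hg1 hg2 using key
  let S : ℕ → Finset ℕ := fun n => Nat.rec ∅ (fun _ s => insert (g s) s) n
  have hS : ∀ n, S (n + 1) = insert (g (S n)) (S n) := fun n => rfl
  have hmono : Monotone S := monotone_nat_of_le_succ fun n => by
    rw [hS]; exact Finset.subset_insert _ _
  let f : ℕ → ℕ := fun n => g (S n)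
  have hmem : ∀ m n, m < n → f m ∈ S n := fun m n h =>
    hmono (Nat.succ_le_of_lt h) (by rw [Nat.succ_eq_add_one, hS]; exact Finset.mem_insert_self _ _)
  have hinj : Function.Injective f := by
    intro m n h
    rcases lt_trichotomy m n with h1 | h1 | h1
    · exact absurd (h ▸ hmem m n h1) (hg1 _)
    · exact h1
    · exact absurd (h ▸ hmem n m h1) (hg1 _)
  have hSf : ∀ n x, x ∈ S n → ∃ k, f k = x := by
    intro n
    induction n with
    | zero => intro x hx; simp [S] at hx
    | succ n ih =>
      intro x hx
      rw [hS, Finset.mem_insert] at hx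
      rcases hx with rfl | hx
      · exact ⟨n, rfl⟩
      · exact ih x hx
  have hsurj : Function.Surjective f := by
    intro m
    by_contra hm
    have h1 : ∀ n, w m ≤ w (f n) := fun n => hg2 _ _ fun hx => hm (hSf n m hx)
    have h2 : Tendsto (fun n => w (f n)) cofinite (nhds 0) := hlim.comp hinj.tendsto_cofinite
    exact absurd (ge_of_tendsto' h2 h1) (not_le.2 (hw m))
  refine ⟨Equiv.ofBijective f ⟨hinj, hsurj⟩, fun m n hmn => ?_⟩
  exact hg2 _ _ fun hx => hg1 (S n) (hmono hmn hx)

theorem sum_ico_dyadic_le (a : ℕ → ℝ) (ha : Antitone a) (i : ℕ) :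
    ∑ k ∈ Finset.Ico (2 ^ i) (2 ^ (i + 1)), a k ≤ 2 ^ i * a (2 ^ i) := by
  have := Finset.sum_le_card_nsmul (Finset.Ico (2 ^ i) (2 ^ (i + 1))) a (a (2 ^ i))
    (fun k hk => ha (Finset.mem_Ico.1 hk).1)
  have hc : (2 ^ (i + 1) - 2 ^ i : ℕ) = 2 ^ i := by rw [pow_succ]; omega
  rw [Nat.card_Ico, hc] at this
  simpa using this

/-- Hardy type inequality for decreasing sequences, `0 < p < 1`. -/
theorem hardy_summable (p : ℝ) (hp0 : 0 < p) (hp1 : p < 1) (a : ℕ → ℝ) (ha0 : ∀ n, 0 ≤ a n)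
    (ha : Antitone a) (hs : Summable a) (hsp : Summable fun n => a n ^ p) :
    Summable fun n : ℕ => (n : ℝ) ^ (-p) * (∑' k, a (k + n)) ^ p := by
  have hS0 : ∀ n, 0 ≤ ∑' k, a (k + n) := fun n => tsum_nonneg fun k => ha0 _
  have hSanti : ∀ m n, m ≤ n → ∑' k, a (k + n) ≤ ∑' k, a (k + m) := by
    intro m n hmn
    refine Summable.tsum_le_tsum (fun k => ha (by omega)) ((summable_nat_add_iff n).2 hs)
      ((summable_nat_add_iff m).2 hs)
  rw [← summable_condensed_iff_of_nonneg]
  rotate_left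
  · intro n; exact mul_nonneg (Real.rpow_nonneg (Nat.cast_nonneg _) _) (Real.rpow_nonneg (hS0 n) _)
  · intro m n hm hmn
    refine mul_le_mul ?_ ?_ (Real.rpow_nonneg (hS0 n) _) (Real.rpow_nonneg (Nat.cast_nonneg _) _)
    · exact Real.rpow_le_rpow_of_nonpos (by exact_mod_cast hm) (by exact_mod_cast hmn) (by linarith)
    · exact Real.rpow_le_rpow (hS0 n) (hSanti m n hmn) hp0.le
  have hc : Summable fun k : ℕ => (2 : ℝ) ^ k * a (2 ^ k) ^ p := by
    rw [summable_condensed_iff_of_nonneg (f := fun n => a n ^ p)]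
    · exact hsp
    · intro n; exact Real.rpow_nonneg (ha0 n) _
    · intro m n _ hmn; exact Real.rpow_le_rpow (ha0 n) (ha hmn) hp0.le
  set q : ℝ := 2 ^ (1 - p) with hq
  have hq0 : 0 < q := by positivity
  have hq1 : 1 < q := Real.one_lt_rpow (by norm_num) (by linarith)
  have hterm : ∀ k : ℕ, (2 : ℝ) ^ k * (((2 ^ k : ℕ) : ℝ) ^ (-p) * (∑' j, a (j + 2 ^ k)) ^ p)
      = q ^ k * (∑' j, a (j + 2 ^ k)) ^ p := by
    intro k
    rw [← mul_assoc]
    congr 1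
    push_cast
    rw [hq, ← Real.rpow_natCast, ← Real.rpow_natCast, ← Real.rpow_mul (by norm_num),
      ← Real.rpow_mul (by norm_num), ← Real.rpow_add (by norm_num)]
    congr 1; ring
  simp_rw [hterm]
  -- truncated tails
  set C : ℝ := ∑' k : ℕ, (2 : ℝ) ^ k * a (2 ^ k) ^ p with hC
  let T : ℕ → ℕ → ℝ := fun M i => ∑ k ∈ Finset.Ico (2 ^ i) (2 ^ M), a k
  have hT0 : ∀ M i, 0 ≤ T M i := fun M i => Finset.sum_nonneg fun k _ => ha0 k
  have hTrec : ∀ M i, i < M → q ^ i * T M i ^ p ≤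
      2 ^ i * a (2 ^ i) ^ p + q⁻¹ * (q ^ (i + 1) * T M (i + 1) ^ p) := by
    intro M i hi
    have h1 : T M i ≤ 2 ^ i * a (2 ^ i) + T M (i + 1) := by
      have : T M i = ∑ k ∈ Finset.Ico (2 ^ i) (2 ^ (i + 1)), a k + T M (i + 1) := by
        refine (Finset.sum_Ico_consecutive a ?_ ?_).symm
        · exact Nat.pow_le_pow_right (by norm_num) (by omega)
        · exact Nat.pow_le_pow_right (by norm_num) (by omega)
      rw [this]
      gcongr
      exact sum_ico_dyadic_le a ha i
    have h2 : T M i ^ p ≤ (2 ^ i * a (2 ^ i)) ^ p + T M (i + 1) ^ p :=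
      (Real.rpow_le_rpow (hT0 M i) h1 hp0.le).trans
        (Real.rpow_add_le_add_rpow (mul_nonneg (by positivity) (ha0 _)) (hT0 _ _) hp0.le hp1.le)
    have h3 : q ^ i * (2 ^ i * a (2 ^ i)) ^ p = 2 ^ i * a (2 ^ i) ^ p := by
      rw [Real.mul_rpow (by positivity) (ha0 _), ← mul_assoc]
      congr 1
      rw [hq, ← Real.rpow_natCast, ← Real.rpow_natCast, ← Real.rpow_mul (by norm_num),
        ← Real.rpow_mul (by norm_num), ← Real.rpow_add (by norm_num)]
      congr 1; ring
    calc q ^ i * T M i ^ p ≤ q ^ i * ((2 ^ i * a (2 ^ i)) ^ p + T M (i + 1) ^ p) := by gcongr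
      _ = _ := by rw [mul_add, h3, pow_succ]; field_simp
  have hTsum : ∀ M, ∑ i ∈ Finset.range M, q ^ i * T M i ^ p ≤ C / (1 - q⁻¹) := by
    intro M
    have hqi : 0 < 1 - q⁻¹ := by
      have := inv_lt_one_of_one_lt₀ hq1
      linarith
    rw [le_div_iff₀ hqi]
    have h1 : ∑ i ∈ Finset.range M, q ^ i * T M i ^ p ≤ ∑ i ∈ Finset.range M,
        (2 ^ i * a (2 ^ i) ^ p + q⁻¹ * (q ^ (i + 1) * T M (i + 1) ^ p)) :=
      Finset.sum_le_sum fun i hi => hTrec M i (Finset.mem_range.1 hi)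
    rw [Finset.sum_add_distrib, ← Finset.mul_sum] at h1
    have h2 : ∑ i ∈ Finset.range M, (2 : ℝ) ^ i * a (2 ^ i) ^ p ≤ C :=
      hc.sum_le_tsum _ fun i _ => mul_nonneg (by positivity) (Real.rpow_nonneg (ha0 _) _)
    have h3 : ∑ i ∈ Finset.range M, q ^ (i + 1) * T M (i + 1) ^ p ≤
        ∑ i ∈ Finset.range M, q ^ i * T M i ^ p := by
      have e1 := Finset.sum_range_succ (fun i => q ^ i * T M i ^ p) M
      have e2 := Finset.sum_range_succ' (fun i => q ^ i * T M i ^ p) M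
      have e3 : T M M = 0 := by simp [T]
      rw [e3, Real.zero_rpow hp0.ne', mul_zero, add_zero] at e1
      have e4 : 0 ≤ q ^ 0 * T M 0 ^ p := mul_nonneg (by positivity) (Real.rpow_nonneg (hT0 _ _) _)
      linarith
    have h4 := mul_le_mul_of_nonneg_left h3 (inv_nonneg.2 hq0.le)
    linarith
  refine summable_of_sum_range_le (c := C / (1 - q⁻¹))
    (fun i => mul_nonneg (by positivity) (Real.rpow_nonneg (hS0 _) _)) fun N => ?_
  have hlim : Tendsto (fun M => ∑ i ∈ Finset.range N, q ^ i * T M i ^ p) atTop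
      (nhds (∑ i ∈ Finset.range N, q ^ i * (∑' j, a (j + 2 ^ i)) ^ p)) := by
    refine tendsto_finsetSum _ fun i _ => ?_
    refine Tendsto.const_mul _ ?_
    refine Tendsto.rpow_const ?_ (Or.inr hp0.le)
    have h1 := (((summable_nat_add_iff (2 ^ i)).2 hs).hasSum.tendsto_sum_nat).comp
      ((tendsto_sub_atTop_nat (2 ^ i)).comp (tendsto_pow_atTop_atTop_of_one_lt (one_lt_two (α := ℕ))))
    refine h1.congr fun M => ?_
    simp only [Function.comp, T]
    rw [Finset.sum_Ico_eq_sum_range]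
    exact Finset.sum_congr rfl fun k _ => by rw [add_comm]
  refine le_of_tendsto hlim ?_
  filter_upwards [eventually_ge_atTop N] with M hM
  refine (Finset.sum_le_sum_of_subset_of_nonneg (Finset.range_mono hM) ?_).trans (hTsum M)
  intro i _ _
  exact mul_nonneg (by positivity) (Real.rpow_nonneg (hT0 _ _) _)

theorem summable_of_summable_rpow {ι : Type*} (p : ℝ) (hp0 : 0 < p) (hp1 : p < 1) (a : ι → ℝ)
    (ha0 : ∀ n, 0 ≤ a n) (hsp : Summable fun n => a n ^ p) : Summable a := by
  refine Summable.of_norm_bounded_eventually hsp ?_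
  have h := hsp.tendsto_cofinite_zero.eventually (Iio_mem_nhds one_pos)
  filter_upwards [h] with i hi
  have hi1 : a i ≤ 1 := by
    by_contra hlt
    push Not at hlt
    exact absurd hi (not_lt.2 (Real.one_le_rpow hlt.le hp0.le))
  rw [Real.norm_of_nonneg (ha0 i)]
  exact Real.self_le_rpow_of_le_one (ha0 i) hi1 hp1.le

end sorting

section boxwidth

open Filter Module

variable {Y : Type*} [NormedAddCommGroup Y] [NormedSpace ℂ Y]

theorem width_summable [CompleteSpace Y] (p : ℝ) (hp0 : 0 < p) (hp1 : p < 1) (v : ℕ → Y)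
    (hv : Summable fun j => ‖v j‖ ^ p) (S : Set Y)
    (hS : ∀ y ∈ S, ∃ c : ℕ → ℂ, (∀ j, ‖c j‖ ≤ 1) ∧ HasSum (fun j => c j • v j) y) :
    Summable fun n : ℕ => ((n + 1 : ℝ) ^ (1 / p - 1) * kolWidth (n + 1) S) ^ p / (n + 1) := by
  set w : ℕ → ℝ := fun n => ‖v n‖ ^ p + (1 / 2) ^ n with hw
  have hwpos : ∀ n, 0 < w n := fun n => by positivity
  have hws : Summable w := hv.add summable_geometric_two
  obtain ⟨e, he⟩ := exists_antitone_rearrangement w hwpos hws.tendsto_cofinite_zero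
  set a : ℕ → ℝ := fun k => w (e k) ^ (1 / p) with ha
  have ha0 : ∀ k, 0 ≤ a k := fun k => Real.rpow_nonneg (hwpos _).le _
  have hap : ∀ k, a k ^ p = w (e k) := fun k => by
    rw [ha, ← Real.rpow_mul (hwpos _).le, one_div_mul_cancel hp0.ne', Real.rpow_one]
  have haanti : Antitone a := fun m n hmn =>
    Real.rpow_le_rpow (hwpos _).le (he hmn) (by positivity)
  have hasp : Summable fun k => a k ^ p := by
    simp_rw [hap]
    exact (e.summable_iff).2 hws
  have hs : Summable a := summable_of_summable_rpow p hp0 hp1 a ha0 hasp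
  have hva : ∀ k, ‖v (e k)‖ ≤ a k := fun k => by
    have : (‖v (e k)‖ ^ p) ^ (1 / p) ≤ w (e k) ^ (1 / p) :=
      Real.rpow_le_rpow (by positivity) (by simp [hw]) (by positivity)
    rwa [← Real.rpow_mul (norm_nonneg _), mul_one_div_cancel hp0.ne', Real.rpow_one] at this
  have hwidth : ∀ n, kolWidth n S ≤ ∑' k, a (k + n) := by
    intro n
    have hfs : ((fun k => v (e k)) '' (Finset.range n : Set ℕ)).Finite :=
      (Finset.finite_toSet _).image _
    classical
    refine kolWidth_le (tsum_nonneg fun k => ha0 _)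
      (Submodule.span ℂ ((Finset.range n).image (fun k => v (e k)) : Set Y))
      (FiniteDimensional.span_finset ℂ _) ?_ ?_
    · refine (finrank_span_finset_le_card _).trans ?_
      exact Finset.card_image_le.trans (by simp)
    · intro y hy
      obtain ⟨c, hc, hsum⟩ := hS y hy
      have hsum' : HasSum (fun k => c (e k) • v (e k)) y := (e.hasSum_iff).2 hsum
      refine ⟨∑ k ∈ Finset.range n, c (e k) • v (e k), ?_, ?_⟩
      · refine Submodule.sum_mem _ fun k hk => Submodule.smul_mem _ _ (Submodule.subset_span ?_)
        exact Finset.mem_coe.2 (Finset.mem_image_of_mem _ hk)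
      · have h1 : HasSum (fun k => c (e (k + n)) • v (e (k + n)))
            (y - ∑ k ∈ Finset.range n, c (e k) • v (e k)) :=
          (hasSum_nat_add_iff' n).2 hsum'
        rw [← h1.tsum_eq]
        refine tsum_of_norm_bounded ((summable_nat_add_iff n).2 hs).hasSum fun k => ?_
        rw [norm_smul]
        calc ‖c (e (k + n))‖ * ‖v (e (k + n))‖ ≤ 1 * a (k + n) :=
              mul_le_mul (hc _) (hva _) (norm_nonneg _) zero_le_one
          _ = _ := one_mul _
  have hH := hardy_summable p hp0 hp1 a ha0 haanti hs hasp
  have hH1 := (summable_nat_add_iff 1).2 hH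
  refine Summable.of_nonneg_of_le (fun n => ?_) (fun n => ?_) hH1
  · have := kolWidth_nonneg (n + 1) S
    positivity
  · have h0 := kolWidth_nonneg (n + 1) S
    have hn : (0 : ℝ) < (n : ℝ) + 1 := by positivity
    rw [Real.mul_rpow (by positivity) h0, ← Real.rpow_mul hn.le, mul_div_right_comm]
    have : ((n : ℝ) + 1) ^ ((1 / p - 1) * p) / (n + 1) = ((n : ℝ) + 1) ^ (-p) := by
      nth_rw 2 [← Real.rpow_one ((n : ℝ) + 1)]
      rw [← Real.rpow_sub hn]
      congr 1
      field_simp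
      ring
    rw [this]
    push_cast
    gcongr
    exact hwidth _

/-- Version with an arbitrary countable index type. -/
theorem width_summable' [CompleteSpace Y] {ι : Type*} [Countable ι]
    (p : ℝ) (hp0 : 0 < p) (hp1 : p < 1) (v : ι → Y)
    (hv : Summable fun j => ‖v j‖ ^ p) (S : Set Y)
    (hS : ∀ y ∈ S, ∃ c : ι → ℂ, (∀ j, ‖c j‖ ≤ 1) ∧ HasSum (fun j => c j • v j) y) :
    Summable fun n : ℕ => ((n + 1 : ℝ) ^ (1 / p - 1) * kolWidth (n + 1) S) ^ p / (n + 1) := by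
  obtain ⟨f, hf⟩ := exists_injective_nat ι
  refine width_summable p hp0 hp1 (Function.extend f v 0) ?_ S ?_
  · refine (hf.summable_iff ?_).1 ?_
    · intro x hx
      rw [Function.extend_apply' _ _ _ (by simpa using hx)]
      simp [Real.zero_rpow hp0.ne']
    · simpa [Function.comp_def, hf.extend_apply] using hv
  · intro y hy
    obtain ⟨c, hc, hsum⟩ := hS y hy
    refine ⟨Function.extend f c 0, fun j => ?_, ?_⟩
    · by_cases hj : ∃ i, f i = j
      · obtain ⟨i, rfl⟩ := hj
        rw [hf.extend_apply]; exact hc i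
      · rw [Function.extend_apply' _ _ _ hj]; simp
    · refine (hf.hasSum_iff ?_).1 ?_
      · intro x hx
        rw [Function.extend_apply' _ _ _ (by simpa using hx)]
        simp
      · simpa [Function.comp_def, hf.extend_apply] using hsum

end boxwidth

section holomorphic

open Filter Metric

variable {X Y : Type*} [NormedAddCommGroup X] [NormedSpace ℂ X]
  [NormedAddCommGroup Y] [NormedSpace ℂ Y]

theorem cauchy_fderiv {f : X → Y} {x : X} {r M : ℝ} (hr : 0 < r)
    (hf : DifferentiableOn ℂ f (ball x r)) (hM : ∀ y ∈ ball x r, ‖f y‖ ≤ M) :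
    ‖fderiv ℂ f x‖ ≤ 2 * M / r := by
  refine Complex.norm_fderiv_le_div_of_mapsTo_ball hf (fun y hy => ?_) hr
  rw [mem_closedBall, dist_eq_norm]
  have h1 := hM y hy
  have h2 := hM x (mem_ball_self hr)
  have := norm_sub_le (f y) (f x)
  linarith

/-- The Fréchet derivative of a bounded holomorphic function on a ball is Lipschitz on a smaller
ball. -/
theorem fderiv_bound_on {f : X → Y} {x : X} {r M : ℝ} (hr : 0 < r)
    (hf : DifferentiableOn ℂ f (ball x (2 * r))) (hM : ∀ y ∈ ball x (2 * r), ‖f y‖ ≤ M) :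
    ∀ y ∈ ball x r, ‖fderiv ℂ f y‖ ≤ 2 * M / r := by
  intro y hy
  have hsub : ball y r ⊆ ball x (2 * r) := ball_subset_ball' (by
    rw [mem_ball] at hy; linarith)
  exact cauchy_fderiv hr (hf.mono hsub) fun z hz => hM z (hsub hz)

theorem lipschitz_on_ball {f : X → Y} {x : X} {r M : ℝ} (hr : 0 < r)
    (hf : DifferentiableOn ℂ f (ball x (2 * r))) (hM : ∀ y ∈ ball x (2 * r), ‖f y‖ ≤ M) :
    ∀ y ∈ ball x r, ∀ z ∈ ball x r, ‖f y - f z‖ ≤ 2 * M / r * ‖y - z‖ := by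
  intro y hy z hz
  refine (convex_ball x r).norm_image_sub_le_of_norm_fderiv_le (𝕜 := ℂ) (fun w hw => ?_)
    (fderiv_bound_on hr hf hM) hz hy
  exact (hf.differentiableAt (isOpen_ball.mem_nhds (ball_subset_ball (by linarith) hw)))

theorem fderiv_lipschitz {f : X → Y} {x : X} {r M : ℝ} (hr : 0 < r)
    (hf : DifferentiableOn ℂ f (ball x (4 * r))) (hM : ∀ y ∈ ball x (4 * r), ‖f y‖ ≤ M) :
    ∀ y ∈ ball x (r / 2), ∀ k : X, ‖k‖ < r →
      ‖fderiv ℂ f (y + k) - fderiv ℂ f y‖ ≤ 4 * M / r ^ 2 * ‖k‖ := by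
  intro y hy k hk
  have hlip := lipschitz_on_ball (x := x) (r := 2 * r) (M := M) (by linarith)
    (by convert hf using 2; ring) (by intro z hz; apply hM; convert hz using 2; ring)
  rw [mem_ball] at hy
  have hd : ∀ z ∈ ball x (4 * r), DifferentiableAt ℂ f z := fun z hz =>
    hf.differentiableAt (isOpen_ball.mem_nhds hz)
  have hz1 : ∀ z ∈ ball y (r / 2), z ∈ ball x (2 * r) := by
    intro z hz
    rw [mem_ball] at *
    linarith [dist_triangle z y x]
  have hz2 : ∀ z ∈ ball y (r / 2), z + k ∈ ball x (2 * r) := by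
    intro z hz
    rw [mem_ball] at *
    have : dist (z + k) z = ‖k‖ := by simp [dist_eq_norm]
    linarith [dist_triangle z y x, dist_triangle (z + k) z x]
  have hsub : ∀ z ∈ ball x (2 * r), DifferentiableAt ℂ f z := fun z hz =>
    hd z (ball_subset_ball (by linarith) hz)
  have hG : ∀ z ∈ ball y (r / 2), HasFDerivAt (fun z => f (z + k) - f z)
      (fderiv ℂ f (z + k) - fderiv ℂ f z) z := by
    intro z hz
    refine HasFDerivAt.sub ?_ (hsub z (hz1 z hz)).hasFDerivAt
    exact (hasFDerivAt_comp_add_right k).2 (hsub _ (hz2 z hz)).hasFDerivAt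
  have hb := cauchy_fderiv (f := fun z => f (z + k) - f z) (x := y) (r := r / 2)
    (M := 2 * M / (2 * r) * ‖k‖) (by linarith)
    (fun z hz => (hG z hz).differentiableAt.differentiableWithinAt) (by
      intro z hz
      have := hlip _ (hz2 z hz) _ (hz1 z hz)
      simpa using this)
  rw [(hG y (mem_ball_self (by linarith))).fderiv] at hb
  refine hb.trans (le_of_eq ?_)
  field_simp
  try ring

/-- Uniform limits of holomorphic functions are holomorphic. -/
theorem differentiableAt_of_uniform_limit [CompleteSpace Y] {F : ℕ → X → Y} {g : X → Y} {x : X}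
    {r : ℝ} (hr : 0 < r) (hF : ∀ᶠ n in atTop, DifferentiableOn ℂ (F n) (ball x (2 * r)))
    (hlim : TendstoUniformlyOn F g atTop (ball x (2 * r))) : DifferentiableAt ℂ g x := by
  obtain ⟨N0, hN0⟩ := eventually_atTop.1 hF
  have hcau := hlim.uniformCauchySeqOn
  have hcau' : UniformCauchySeqOn (fun n y => fderiv ℂ (F n) y) atTop (ball x r) := by
    rw [Metric.uniformCauchySeqOn_iff] at hcau ⊢
    intro ε hε
    obtain ⟨N, hN⟩ := hcau (ε * r / 4) (by positivity)
    refine ⟨max N N0, fun m hm n hn y hy => ?_⟩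
    have hm' := le_trans (le_max_right N N0) hm
    have hn' := le_trans (le_max_right N N0) hn
    have hsub : ball y r ⊆ ball x (2 * r) := ball_subset_ball' (by
      rw [mem_ball] at hy; linarith)
    have hym : y ∈ ball x (2 * r) := hsub (mem_ball_self hr)
    have hdm := (hN0 m hm').differentiableAt (isOpen_ball.mem_nhds hym)
    have hdn := (hN0 n hn').differentiableAt (isOpen_ball.mem_nhds hym)
    have h1 := cauchy_fderiv (f := fun z => F m z - F n z) (x := y) (r := r) (M := ε * r / 4) hr
      (((hN0 m hm').sub (hN0 n hn')).mono hsub) (by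
        intro z hz
        rw [← dist_eq_norm]
        exact (hN m (le_trans (le_max_left N N0) hm) n (le_trans (le_max_left N N0) hn) z
          (hsub hz)).le)
    rw [dist_eq_norm]
    have h2 : fderiv ℂ (fun z => F m z - F n z) y = fderiv ℂ (F m) y - fderiv ℂ (F n) y :=
      fderiv_fun_sub hdm hdn
    rw [h2] at h1
    refine lt_of_le_of_lt h1 ?_
    field_simp
    linarith
  have hex : ∀ y, ∃ L, y ∈ ball x r → Tendsto (fun n => fderiv ℂ (F n) y) atTop (nhds L) := by
    intro y
    by_cases hy : y ∈ ball x r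
    · obtain ⟨L, hL⟩ := cauchySeq_tendsto_of_complete (hcau'.cauchySeq hy)
      exact ⟨L, fun _ => hL⟩
    · exact ⟨0, fun h => absurd h hy⟩
  choose g' hg' using hex
  have hunif := hcau'.tendstoUniformlyOn_of_tendsto hg'
  have hxm : x ∈ ball x r := mem_ball_self hr
  have hsub : ball x r ⊆ ball x (2 * r) := ball_subset_ball (by linarith)
  refine (hasFDerivAt_of_tendstoUniformlyOn (l := atTop) (f := fun n => F (n + N0))
    (f' := fun n y => fderiv ℂ (F (n + N0)) y) (g := g) (g' := g') (x := x) isOpen_ball ?_ ?_ ?_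
    hxm).differentiableAt
  · intro U hU
    exact (tendsto_add_atTop_nat N0).eventually (hunif U hU)
  · intro n y hy
    exact ((hN0 (n + N0) (by omega)).differentiableAt
      (isOpen_ball.mem_nhds (hsub hy))).hasFDerivAt
  · intro y hy
    exact (hlim.tendsto_at (hsub hy)).comp (tendsto_add_atTop_nat N0)

theorem taylor_one {f : X → Y} {x : X} {r M : ℝ} (hr : 0 < r)
    (hf : DifferentiableOn ℂ f (ball x (4 * r))) (hM : ∀ y ∈ ball x (4 * r), ‖f y‖ ≤ M) :
    ∀ y ∈ ball x (r / 2), ∀ k : X, ‖k‖ < r →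
      ‖f (y + k) - f y - fderiv ℂ f y k‖ ≤ 4 * M / r ^ 2 * ‖k‖ ^ 2 := by
  intro y hy k hk
  have hM0 : 0 ≤ M := (norm_nonneg _).trans (hM x (mem_ball_self (by linarith)))
  have h1 := (convex_closedBall y ‖k‖).norm_image_sub_le_of_norm_fderiv_le' (𝕜 := ℂ) (f := f)
    (φ := fderiv ℂ f y) (C := 4 * M / r ^ 2 * ‖k‖) (x := y) (y := y + k) ?_ ?_
    (mem_closedBall_self (norm_nonneg _)) (by simp)
  · simp only [add_sub_cancel_left] at h1
    refine h1.trans (le_of_eq (by ring))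
  · intro z hz
    refine hf.differentiableAt (isOpen_ball.mem_nhds ?_)
    rw [mem_ball] at *
    rw [mem_closedBall] at hz
    linarith [dist_triangle z y x]
  · intro z hz
    rw [mem_closedBall, dist_eq_norm] at hz
    have := fderiv_lipschitz hr hf hM y hy (z - y) (by linarith)
    rw [add_sub_cancel] at this
    refine this.trans ?_
    gcongr

theorem directional_differentiable [CompleteSpace Y] {f : X → Y} {x : X} {r M : ℝ} (hr : 0 < r)
    (hf : DifferentiableOn ℂ f (ball x (4 * r))) (hM : ∀ y ∈ ball x (4 * r), ‖f y‖ ≤ M) (k : X) :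
    ∀ z ∈ ball x (r / 4), DifferentiableAt ℂ (fun y => fderiv ℂ f y k) z := by
  intro z hz
  have hM0 : 0 ≤ M := (norm_nonneg _).trans (hM x (mem_ball_self (by linarith)))
  have hk : ∀ᶠ n : ℕ in atTop, ‖((n : ℂ) + 1)⁻¹ • k‖ < r := by
    have : Tendsto (fun n : ℕ => ‖k‖ * (1 / ((n : ℝ) + 1))) atTop (nhds (‖k‖ * 0)) :=
      tendsto_one_div_add_atTop_nhds_zero_nat.const_mul _
    rw [mul_zero] at this
    filter_upwards [this.eventually (Iio_mem_nhds hr)] with n hn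
    rw [norm_smul, norm_inv]
    have e : ‖(n : ℂ) + 1‖ = (n : ℝ) + 1 := by
      have := Complex.norm_natCast (n + 1); push_cast at this; exact this
    rw [e, mul_comm, ← one_div]; exact hn
  have e : ∀ n : ℕ, ‖(n : ℂ) + 1‖ = (n : ℝ) + 1 := fun n => by
    have := Complex.norm_natCast (n + 1); push_cast at this; exact this
  have hsub : ball z (2 * (r / 8)) ⊆ ball x (r / 2) := ball_subset_ball' (by
    rw [mem_ball] at hz; linarith)
  refine differentiableAt_of_uniform_limit (r := r / 8) (by linarith)
    (F := fun n y => ((n : ℂ) + 1) • (f (y + ((n : ℂ) + 1)⁻¹ • k) - f y)) ?_ ?_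
  · filter_upwards [hk] with n hn
    intro y hy
    have hy' := hsub hy
    rw [mem_ball] at hy'
    refine DifferentiableAt.differentiableWithinAt ?_
    refine DifferentiableAt.const_smul (DifferentiableAt.sub ?_ ?_) _
    · refine (differentiableAt_comp_add_right _).2 ?_
      refine hf.differentiableAt (isOpen_ball.mem_nhds ?_)
      rw [mem_ball]
      have : dist (y + ((n : ℂ) + 1)⁻¹ • k) y = ‖((n : ℂ) + 1)⁻¹ • k‖ := by simp [dist_eq_norm]
      linarith [dist_triangle (y + ((n : ℂ) + 1)⁻¹ • k) y x]
    · refine hf.differentiableAt (isOpen_ball.mem_nhds ?_)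
      rw [mem_ball]
      linarith
  · rw [Metric.tendstoUniformlyOn_iff]
    intro ε hε
    have hlim : Tendsto (fun n : ℕ => 4 * M / r ^ 2 * ‖k‖ ^ 2 * (1 / ((n : ℝ) + 1))) atTop
        (nhds (4 * M / r ^ 2 * ‖k‖ ^ 2 * 0)) :=
      tendsto_one_div_add_atTop_nhds_zero_nat.const_mul _
    rw [mul_zero] at hlim
    filter_upwards [hk, hlim.eventually (Iio_mem_nhds hε)] with n hn hn2 y hy
    have h1 := taylor_one hr hf hM y (hsub hy) _ hn
    have hne : (n : ℂ) + 1 ≠ 0 := by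
      intro h0
      have := e n
      rw [h0, norm_zero] at this
      have : (0 : ℝ) < (n : ℝ) + 1 := by positivity
      linarith
    rw [dist_comm, dist_eq_norm]
    have h2 : ((n : ℂ) + 1) • (f (y + ((n : ℂ) + 1)⁻¹ • k) - f y) - fderiv ℂ f y k
        = ((n : ℂ) + 1) • (f (y + ((n : ℂ) + 1)⁻¹ • k) - f y
            - fderiv ℂ f y (((n : ℂ) + 1)⁻¹ • k)) := by
      rw [smul_sub _ (_ - _), map_smul, smul_smul, mul_inv_cancel₀ hne, one_smul]
    rw [h2, norm_smul, e]
    have hn0 : (0 : ℝ) < (n : ℝ) + 1 := by positivity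
    calc ((n : ℝ) + 1) * _ ≤ ((n : ℝ) + 1) * (4 * M / r ^ 2 * ‖((n : ℂ) + 1)⁻¹ • k‖ ^ 2) := by
          gcongr
      _ = 4 * M / r ^ 2 * ‖k‖ ^ 2 * (1 / ((n : ℝ) + 1)) := by
          rw [norm_smul, norm_inv, e]; field_simp
      _ < ε := hn2

theorem fderiv_differentiableAt_aux [CompleteSpace Y] {f : X → Y} {x : X} {r M : ℝ} (hr : 0 < r)
    (hf : DifferentiableOn ℂ f (ball x (4 * r))) (hM : ∀ y ∈ ball x (4 * r), ‖f y‖ ≤ M) :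
    DifferentiableAt ℂ (fderiv ℂ f) x := by
  have hM0 : 0 ≤ M := (norm_nonneg _).trans (hM x (mem_ball_self (by linarith)))
  have hr4 : 0 < r / 4 := by linarith
  have hdir := directional_differentiable hr hf hM
  have hxm : x ∈ ball x (r / 4) := mem_ball_self hr4
  have hD : ∀ y ∈ ball x (r / 4), ‖fderiv ℂ f y‖ ≤ 2 * M / (2 * r) := by
    intro y hy
    refine fderiv_bound_on (x := x) (r := 2 * r) (M := M) (by linarith)
      (by convert hf using 2; ring) (by intro z hz; apply hM; convert hz using 2; ring) y
      (ball_subset_ball (by linarith) hy)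
  let L0 : X →ₗ[ℂ] (X →L[ℂ] Y) :=
    { toFun := fun k => fderiv ℂ (fun y => fderiv ℂ f y k) x
      map_add' := by
        intro k l
        rw [← fderiv_fun_add (hdir k x hxm) (hdir l x hxm)]
        simp only [map_add]
      map_smul' := by
        intro c k
        rw [RingHom.id_apply, ← fderiv_fun_const_smul (hdir k x hxm)]
        simp only [map_smul] }
  let L : X →L[ℂ] (X →L[ℂ] Y) := L0.mkContinuous (2 * (2 * M / (2 * r)) / (r / 4)) (by
    intro k
    have := cauchy_fderiv (f := fun y => fderiv ℂ f y k) (x := x) (r := r / 4)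
      (M := 2 * M / (2 * r) * ‖k‖) hr4
      (fun z hz => (hdir k z hz).differentiableWithinAt) (by
        intro z hz
        exact (ContinuousLinearMap.le_opNorm _ _).trans (by gcongr; exact hD z hz))
    refine this.trans (le_of_eq ?_)
    ring)
  have hL : ∀ k, L k = fderiv ℂ (fun y => fderiv ℂ f y k) x := fun k => rfl
  have hrem : ∀ k, ‖k‖ < r → ‖fderiv ℂ f (x + k) - fderiv ℂ f x - L k‖ ≤
      2 * (4 * M / r ^ 2) / (r / 4) * ‖k‖ ^ 2 := by
    intro k hk
    have hd : ∀ z ∈ ball x (r / 4), DifferentiableAt ℂ f z ∧ DifferentiableAt ℂ f (z + k) := by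
      intro z hz
      rw [mem_ball] at hz
      constructor
      · refine hf.differentiableAt (isOpen_ball.mem_nhds ?_)
        rw [mem_ball]; linarith
      · refine hf.differentiableAt (isOpen_ball.mem_nhds ?_)
        rw [mem_ball]
        have : dist (z + k) z = ‖k‖ := by simp [dist_eq_norm]
        linarith [dist_triangle (z + k) z x]
    have hH : ∀ z ∈ ball x (r / 4), HasFDerivAt (fun y => f (y + k) - f y - fderiv ℂ f y k)
        (fderiv ℂ f (z + k) - fderiv ℂ f z - fderiv ℂ (fun y => fderiv ℂ f y k) z) z := by
      intro z hz
      refine HasFDerivAt.sub (HasFDerivAt.sub ?_ (hd z hz).1.hasFDerivAt) (hdir k z hz).hasFDerivAt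
      exact (hasFDerivAt_comp_add_right k).2 (hd z hz).2.hasFDerivAt
    have := cauchy_fderiv (f := fun y => f (y + k) - f y - fderiv ℂ f y k) (x := x) (r := r / 4)
      (M := 4 * M / r ^ 2 * ‖k‖ ^ 2) hr4
      (fun z hz => (hH z hz).differentiableAt.differentiableWithinAt) (by
        intro z hz
        exact taylor_one hr hf hM z (ball_subset_ball (by linarith) hz) k hk)
    rw [(hH x hxm).fderiv] at this
    rw [hL]
    refine this.trans (le_of_eq ?_)
    ring
  have : HasFDerivAt (fderiv ℂ f) L x := by
    rw [hasFDerivAt_iff_isLittleO_nhds_zero]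
    have h1 : (fun k => fderiv ℂ f (x + k) - fderiv ℂ f x - L k) =O[nhds 0]
        fun k : X => ‖k‖ ^ 2 := by
      refine Asymptotics.IsBigO.of_bound (2 * (4 * M / r ^ 2) / (r / 4)) ?_
      filter_upwards [ball_mem_nhds (0 : X) hr] with k hk
      rw [Real.norm_of_nonneg (by positivity)]
      exact hrem k (by simpa using hk)
    refine h1.trans_isLittleO ?_
    have h2 := Asymptotics.isLittleO_norm_pow_id (E' := X) (n := 2) (by norm_num)
    exact h2
  exact this.differentiableAt

theorem fderiv_differentiableOn [CompleteSpace Y] {f : X → Y} {O : Set X} (hO : IsOpen O)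
    (hf : DifferentiableOn ℂ f O) : DifferentiableOn ℂ (fderiv ℂ f) O := by
  intro x hx
  refine DifferentiableAt.differentiableWithinAt ?_
  have hc : ContinuousAt f x := (hf.differentiableAt (hO.mem_nhds hx)).continuousAt
  have h1 : ∀ᶠ y in nhds x, ‖f y‖ ≤ ‖f x‖ + 1 := by
    have := hc.norm.eventually (Iio_mem_nhds (lt_add_one ‖f x‖))
    filter_upwards [this] with y hy using le_of_lt hy
  obtain ⟨r, hr, hball⟩ := Metric.eventually_nhds_iff_ball.1 (h1.and (hO.mem_nhds hx))
  refine fderiv_differentiableAt_aux (r := r / 4) (M := ‖f x‖ + 1) (by linarith) ?_ ?_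
  · rw [show 4 * (r / 4) = r by ring]
    exact hf.mono fun y hy => (hball y hy).2
  · rw [show 4 * (r / 4) = r by ring]
    exact fun y hy => (hball y hy).1

theorem isom_comp {E F G : Type*} [NormedAddCommGroup E] [NormedSpace ℂ E]
    [NormedAddCommGroup F] [NormedSpace ℂ F] [NormedAddCommGroup G] [NormedSpace ℂ G]
    (I : E ≃ₗᵢ[ℂ] F) {g : G → E} {O : Set G} (h : DifferentiableOn ℂ g O) :
    DifferentiableOn ℂ (fun x => I (g x)) O :=
  (I.comp_differentiableOn_iff).2 h

theorem iteratedFDeriv_differentiableOn [CompleteSpace Y] {f : X → Y} {O : Set X} (hO : IsOpen O)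
    (hf : DifferentiableOn ℂ f O) (m : ℕ) :
    DifferentiableOn ℂ (iteratedFDeriv ℂ m f) O := by
  induction m with
  | zero =>
    rw [iteratedFDeriv_zero_eq_comp]
    exact (LinearIsometryEquiv.differentiable _).comp_differentiableOn hf
  | succ m ih =>
    have h := fderiv_differentiableOn (Y := X [×m]→L[ℂ] Y) hO ih
    exact isom_comp (E := X →L[ℂ] (X [×m]→L[ℂ] Y)) (F := X [×(m + 1)]→L[ℂ] Y) (G := X)
      (g := fderiv ℂ (iteratedFDeriv ℂ m f))
      (continuousMultilinearCurryLeftEquiv ℂ (fun _ : Fin (m + 1) => X) Y).symm h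

theorem iteratedFDeriv_bound [CompleteSpace Y] {f : X → Y} {x : X} {ε B : ℝ} (hε : 0 < ε)
    (hf : DifferentiableOn ℂ f (ball x ε)) (hB : ∀ y ∈ ball x ε, ‖f y‖ ≤ B) (m : ℕ) :
    ‖iteratedFDeriv ℂ m f x‖ ≤ B * (4 * m / ε) ^ m := by
  rcases Nat.eq_zero_or_pos m with rfl | hm
  · simpa using hB x (mem_ball_self hε)
  have hm0 : (0 : ℝ) < m := by exact_mod_cast hm
  have key : ∀ k ≤ m, ∀ y ∈ ball x (ε - k * (ε / (2 * m))), ‖iteratedFDeriv ℂ k f y‖ ≤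
      B * (4 * m / ε) ^ k := by
    intro k
    induction k with
    | zero => intro _ y hy; simpa using hB y (by simpa using hy)
    | succ k ih =>
      intro hk y hy
      have hsub : ball y (ε / (2 * m)) ⊆ ball x (ε - k * (ε / (2 * m))) := ball_subset_ball' (by
        rw [mem_ball] at hy; push_cast at hy; linarith)
      have hsub2 : ball x (ε - k * (ε / (2 * m))) ⊆ ball x ε := ball_subset_ball (by
        have : 0 ≤ k * (ε / (2 * m)) := by positivity
        linarith)
      have := cauchy_fderiv (f := iteratedFDeriv ℂ k f) (x := y) (r := ε / (2 * m))
        (M := B * (4 * m / ε) ^ k) (by positivity)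
        ((iteratedFDeriv_differentiableOn isOpen_ball hf k).mono (hsub.trans hsub2))
        (fun z hz => ih (by omega) z (hsub hz))
      rw [norm_fderiv_iteratedFDeriv] at this
      refine this.trans (le_of_eq ?_)
      rw [pow_succ]
      field_simp
      norm_num
      try ring
  refine key m le_rfl x (mem_ball_self ?_)
  have : m * (ε / (2 * m)) = ε / 2 := by field_simp
  rw [this]; linarith

theorem iteratedDeriv_line [CompleteSpace Y] {f : X → Y} {x h : X} {O : Set X} (hO : IsOpen O)
    (hf : DifferentiableOn ℂ f O) (m : ℕ) : ∀ t : ℂ, x + t • h ∈ O →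
      iteratedDeriv m (fun t : ℂ => f (x + t • h)) t =
        iteratedFDeriv ℂ m f (x + t • h) (fun _ => h) := by
  have hline : ∀ t : ℂ, HasDerivAt (fun t : ℂ => x + t • h) h t := fun t => by
    simpa using ((hasDerivAt_id t).smul_const h).const_add x
  induction m with
  | zero => intro t _; simp
  | succ m ih =>
    intro t ht
    rw [iteratedDeriv_succ]
    have hev : (iteratedDeriv m fun t : ℂ => f (x + t • h)) =ᶠ[nhds t]
        fun t => iteratedFDeriv ℂ m f (x + t • h) (fun _ => h) := by
      have : ∀ᶠ s in nhds t, x + s • h ∈ O :=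
        (hline t).continuousAt.eventually (hO.mem_nhds ht)
      filter_upwards [this] with s hs using ih s hs
    rw [hev.deriv_eq]
    have hd : HasFDerivAt (iteratedFDeriv ℂ m f) (fderiv ℂ (iteratedFDeriv ℂ m f) (x + t • h))
        (x + t • h) :=
      ((iteratedFDeriv_differentiableOn hO hf m).differentiableAt (hO.mem_nhds ht)).hasFDerivAt
    have h1 := hd.comp_hasDerivAt t (hline t)
    have h2 := (ContinuousMultilinearMap.apply ℂ (fun _ : Fin m => X) Y
      (fun _ => h)).hasFDerivAt.comp_hasDerivAt t h1
    have h3 := h2.deriv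
    rw [iteratedFDeriv_succ_apply_left]
    exact h3

theorem taylor_hasSum [CompleteSpace Y] {f : X → Y} {x h : X} {ε : ℝ}
    (hf : DifferentiableOn ℂ f (ball x ε)) (hh : 2 * ‖h‖ < ε) :
    HasSum (fun m : ℕ => ((m.factorial : ℂ)⁻¹) • iteratedFDeriv ℂ m f x (fun _ => h))
      (f (x + h)) := by
  have hmem : ∀ t ∈ ball (0 : ℂ) 2, x + t • h ∈ ball x ε := by
    intro t ht
    rw [mem_ball_zero_iff] at ht
    rw [mem_ball, dist_eq_norm, add_sub_cancel_left, norm_smul]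
    have := mul_le_mul_of_nonneg_right ht.le (norm_nonneg h)
    linarith
  have hg : DifferentiableOn ℂ (fun t : ℂ => f (x + t • h)) (ball 0 2) := by
    refine hf.comp (g := f) (f := fun t : ℂ => x + t • h) ?_ hmem
    exact ((differentiable_id.smul_const h).const_add x).differentiableOn
  have := Complex.hasSum_taylorSeries_on_ball hg (z := 1) (by simp)
  simp only [sub_zero, one_pow, one_smul] at this
  refine this.congr_fun ?_
  intro m
  have h1 := iteratedDeriv_line (x := x) (h := h) isOpen_ball hf m 0 (hmem 0 (by simp))
  simp only [zero_smul, add_zero] at h1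
  rw [h1]

/-- Expansion of a continuous multilinear map applied to a sum. -/
theorem multilinear_hasSum {m : ℕ} (A : X [×m]→L[ℂ] Y) (φ : ℕ → X) (y : ℕ → ℂ) (h : X)
    (hy : HasSum (fun j => y j • φ j) h)
    (hs : Summable fun τ : Fin m → ℕ => (∏ i, y (τ i)) • A (fun i => φ (τ i))) :
    HasSum (fun τ : Fin m → ℕ => (∏ i, y (τ i)) • A (fun i => φ (τ i))) (A (fun _ => h)) := by
  classical
  have h1 : Tendsto (fun N : ℕ => Fintype.piFinset (fun _ : Fin m => Finset.range N)) atTop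
      atTop := by
    refine tendsto_atTop_finset_of_monotone ?_ ?_
    · intro N M hNM
      exact Fintype.piFinset_subset _ _ fun _ => Finset.range_mono hNM
    · intro τ
      refine ⟨(Finset.univ.sup τ) + 1, ?_⟩
      simp only [Fintype.mem_piFinset, Finset.mem_range]
      intro i
      exact Nat.lt_succ_of_le (Finset.le_sup (f := τ) (Finset.mem_univ i))
  have h2 := hs.hasSum.comp h1
  have h3 : Tendsto (fun N : ℕ => A (fun _ => ∑ j ∈ Finset.range N, y j • φ j)) atTop
      (nhds (A (fun _ => h))) := by
    refine (A.cont.tendsto _).comp ?_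
    exact tendsto_pi_nhds.2 fun _ => hy.tendsto_sum_nat
  have h4 : (fun N : ℕ => A (fun _ => ∑ j ∈ Finset.range N, y j • φ j)) =
      (fun s : Finset (Fin m → ℕ) => ∑ τ ∈ s, (∏ i, y (τ i)) • A (fun i => φ (τ i))) ∘
        fun N : ℕ => Fintype.piFinset (fun _ : Fin m => Finset.range N) := by
    funext N
    simp only [Function.comp]
    rw [A.map_sum_finset (fun _ j => y j • φ j) (fun _ => Finset.range N)]
    refine Finset.sum_congr rfl fun τ _ => ?_
    exact A.map_smul_univ (fun i => y (τ i)) (fun i => φ (τ i))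
  rw [h4] at h3
  rw [← tendsto_nhds_unique h2 h3]
  exact hs.hasSum

theorem summable_prod_fin (m : ℕ) (g : ℕ → ℝ) (hg0 : ∀ j, 0 ≤ g j) (hg : Summable g) :
    Summable (fun τ : Fin m → ℕ => ∏ i, g (τ i)) ∧
      ∑' τ : Fin m → ℕ, ∏ i, g (τ i) ≤ (∑' j, g j) ^ m := by
  classical
  have hb : ∀ s : Finset (Fin m → ℕ), ∑ τ ∈ s, ∏ i, g (τ i) ≤ (∑' j, g j) ^ m := by
    intro s
    have hsub : s ⊆ Fintype.piFinset (fun i => s.image (fun τ => τ i)) := by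
      intro τ hτ
      simp only [Fintype.mem_piFinset]
      exact fun i => Finset.mem_image_of_mem _ hτ
    refine (Finset.sum_le_sum_of_subset_of_nonneg hsub
      fun τ _ _ => Finset.prod_nonneg fun i _ => hg0 _).trans ?_
    rw [← Finset.prod_univ_sum]
    refine (Finset.prod_le_prod (fun i _ => Finset.sum_nonneg fun j _ => hg0 _)
      (fun i _ => hg.sum_le_tsum _ fun j _ => hg0 j)).trans ?_
    simp
  have h0 : ∀ τ : Fin m → ℕ, 0 ≤ ∏ i, g (τ i) := fun τ => Finset.prod_nonneg fun i _ => hg0 _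
  have hs := summable_of_sum_le h0 hb
  exact ⟨hs, hs.tsum_le_of_sum_le hb⟩

theorem pow_self_le_factorial (m : ℕ) : (m : ℝ) ^ m ≤ 3 ^ m * m.factorial := by
  have h1 : (m : ℝ) ^ m / m.factorial ≤ Real.exp m :=
    Real.pow_div_factorial_le_exp _ (Nat.cast_nonneg _) _
  have h2 : Real.exp m ≤ 3 ^ m := by
    rw [← Real.exp_one_pow]
    exact pow_le_pow_left₀ (Real.exp_pos _).le (by have := Real.exp_one_lt_d9; linarith) _
  rw [div_le_iff₀ (by positivity)] at h1
  exact h1.trans (by gcongr)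

/-- Local expansion: the image of a small box around `x` lies in an `ℓ_p` box. -/
theorem local_box [CompleteSpace Y] {f : X → Y} {x : X} {ε B p : ℝ} (hε : 0 < ε)
    (hf : DifferentiableOn ℂ f (ball x ε)) (hB : ∀ y ∈ ball x ε, ‖f y‖ ≤ B)
    (hp0 : 0 < p) (hp1 : p < 1) (φ : ℕ → X) (hφ : Summable fun j => (12 / ε * ‖φ j‖) ^ p)
    (hφ2 : ∑' j, (12 / ε * ‖φ j‖) ^ p ≤ 1 / 2) :
    ∃ v : (Σ m : ℕ, Fin m → ℕ) → Y, (Summable fun τ => ‖v τ‖ ^ p) ∧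
      ∀ y : ℕ → ℂ, (∀ j, ‖y j‖ ≤ 1) → ∀ h : X, HasSum (fun j => y j • φ j) h →
        ∃ c : (Σ m : ℕ, Fin m → ℕ) → ℂ, (∀ τ, ‖c τ‖ ≤ 1) ∧
          HasSum (fun τ => c τ • v τ) (f (x + h)) := by
  have hB0 : 0 ≤ B := (norm_nonneg _).trans (hB x (mem_ball_self hε))
  set b : ℕ → ℝ := fun j => 12 / ε * ‖φ j‖ with hb
  have hb0 : ∀ j, 0 ≤ b j := fun j => by positivity
  set v : (Σ m : ℕ, Fin m → ℕ) → Y := fun τ =>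
    ((τ.1.factorial : ℂ)⁻¹) • iteratedFDeriv ℂ τ.1 f x (fun i => φ (τ.2 i)) with hv
  have hvb : ∀ τ, ‖v τ‖ ≤ B * ∏ i, b (τ.2 i) := by
    rintro ⟨m, τ⟩
    simp only [hv, norm_smul, norm_inv, Complex.norm_natCast]
    have h1 := (iteratedFDeriv ℂ m f x).le_opNorm (fun i => φ (τ i))
    have h2 := iteratedFDeriv_bound hε hf hB m
    have h3 := pow_self_le_factorial m
    have h4 : (0 : ℝ) < m.factorial := by positivity
    have h5 : 0 ≤ ∏ i, ‖φ (τ i)‖ := Finset.prod_nonneg fun i _ => norm_nonneg _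
    calc (m.factorial : ℝ)⁻¹ * ‖iteratedFDeriv ℂ m f x (fun i => φ (τ i))‖
        ≤ (m.factorial : ℝ)⁻¹ * ((B * (4 * m / ε) ^ m) * ∏ i, ‖φ (τ i)‖) := by
          gcongr
          exact h1.trans (by gcongr)
      _ = (m.factorial : ℝ)⁻¹ * ((B * ((4 / ε) ^ m * (m : ℝ) ^ m)) * ∏ i, ‖φ (τ i)‖) := by
          rw [← mul_pow]; congr 5; ring
      _ ≤ (m.factorial : ℝ)⁻¹ * ((B * ((4 / ε) ^ m * (3 ^ m * m.factorial))) *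
            ∏ i, ‖φ (τ i)‖) := by gcongr
      _ = B * ((12 / ε) ^ m * ∏ i, ‖φ (τ i)‖) := by
          rw [show (12 / ε) = 4 / ε * 3 by ring, mul_pow]; field_simp
      _ = B * ∏ i, b (τ i) := by
          simp only [hb, Finset.prod_mul_distrib, Finset.prod_const, Finset.card_univ, Fintype.card_fin]
  have hsp : Summable fun τ => ‖v τ‖ ^ p := by
    have hdom : Summable fun τ : (Σ m : ℕ, Fin m → ℕ) => B ^ p * ∏ i, b (τ.2 i) ^ p := by
      refine Summable.mul_left _ ?_
      have h0 : ∀ j, 0 ≤ b j ^ p := fun j => Real.rpow_nonneg (hb0 j) _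
      rw [summable_sigma_of_nonneg (fun τ => Finset.prod_nonneg fun i _ => h0 _)]
      refine ⟨fun m => (summable_prod_fin m _ h0 hφ).1, ?_⟩
      refine Summable.of_nonneg_of_le (fun m => tsum_nonneg fun τ =>
        Finset.prod_nonneg fun i _ => h0 _) (fun m => ?_) summable_geometric_two
      refine (summable_prod_fin m _ h0 hφ).2.trans ?_
      exact pow_le_pow_left₀ (tsum_nonneg h0) hφ2 m
    refine Summable.of_nonneg_of_le (fun τ => by positivity) (fun τ => ?_) hdom
    refine (Real.rpow_le_rpow (norm_nonneg _) (hvb τ) hp0.le).trans (le_of_eq ?_)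
    rw [Real.mul_rpow hB0 (Finset.prod_nonneg fun i _ => hb0 _),
      Real.finsetProd_rpow _ _ (fun i _ => hb0 _)]
  have hs : Summable fun τ => ‖v τ‖ :=
    summable_of_summable_rpow p hp0 hp1 _ (fun τ => norm_nonneg _) hsp
  refine ⟨v, hsp, fun y hy h hyh => ?_⟩
  have hc1 : ∀ τ : (Σ m : ℕ, Fin m → ℕ), ‖∏ i, y (τ.2 i)‖ ≤ 1 := fun τ => by
    rw [norm_prod]
    exact Finset.prod_le_one (fun i _ => norm_nonneg _) (fun i _ => hy _)
  refine ⟨fun τ => ∏ i, y (τ.2 i), hc1, ?_⟩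
  have hcs : Summable fun τ : (Σ m : ℕ, Fin m → ℕ) => (∏ i, y (τ.2 i)) • v τ := by
    refine Summable.of_norm_bounded hs fun τ => ?_
    rw [norm_smul]
    exact mul_le_of_le_one_left (norm_nonneg _) (hc1 τ)
  have hinner : ∀ m : ℕ, HasSum (fun τ : Fin m → ℕ => (∏ i, y (τ i)) • v ⟨m, τ⟩)
      (((m.factorial : ℂ)⁻¹) • iteratedFDeriv ℂ m f x (fun _ => h)) := by
    intro m
    have h1 := hcs.sigma_factor m
    exact multilinear_hasSum (((m.factorial : ℂ)⁻¹) • iteratedFDeriv ℂ m f x) φ y h hyh h1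
  have hnorm : 2 * ‖h‖ < ε := by
    have hbs : Summable b := summable_of_summable_rpow p hp0 hp1 b hb0 hφ
    have hb1 : ∀ j, b j ≤ b j ^ p := fun j => by
      refine Real.self_le_rpow_of_le_one (hb0 j) ?_ hp1.le
      by_contra hlt
      push Not at hlt
      have h1 := Real.one_le_rpow hlt.le hp0.le
      have h2 := hφ.le_tsum j fun i _ => Real.rpow_nonneg (hb0 i) _
      linarith
    have h1 : ∑' j, b j ≤ 1 / 2 := (hbs.tsum_le_tsum hb1 hφ).trans hφ2
    have h2 : ‖h‖ ≤ ε / 12 * ∑' j, b j := by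
      rw [← hyh.tsum_eq]
      refine tsum_of_norm_bounded (hbs.hasSum.mul_left (ε / 12)) fun j => ?_
      rw [norm_smul]
      refine (mul_le_of_le_one_left (norm_nonneg _) (hy j)).trans (le_of_eq ?_)
      simp only [hb]; field_simp
    have h3 : ε / 12 * ∑' j, b j ≤ ε / 12 * (1 / 2) := by gcongr
    linarith
  have ht := taylor_hasSum hf hnorm
  have := hcs.hasSum.sigma hinner
  rw [← this.unique ht]
  exact hcs.hasSum

end holomorphic

theorem box_norm_lt {X : Type*} [NormedAddCommGroup X] [NormedSpace ℂ X] {ε p : ℝ} (hε : 0 < ε)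
    (hp0 : 0 < p) (hp1 : p < 1) (φ : ℕ → X) (hφ : Summable fun j => (12 / ε * ‖φ j‖) ^ p)
    (hφ2 : ∑' j, (12 / ε * ‖φ j‖) ^ p ≤ 1 / 2) (y : ℕ → ℂ) (hy : ∀ j, ‖y j‖ ≤ 1) (h : X)
    (hyh : HasSum (fun j => y j • φ j) h) : ‖h‖ < ε := by
  set b : ℕ → ℝ := fun j => 12 / ε * ‖φ j‖ with hb
  have hb0 : ∀ j, 0 ≤ b j := fun j => by positivity
  have hbs : Summable b := summable_of_summable_rpow p hp0 hp1 b hb0 hφ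
  have hb1 : ∀ j, b j ≤ b j ^ p := fun j => by
    refine Real.self_le_rpow_of_le_one (hb0 j) ?_ hp1.le
    by_contra hlt
    push Not at hlt
    have h1 := Real.one_le_rpow hlt.le hp0.le
    have h2 := hφ.le_tsum j fun i _ => Real.rpow_nonneg (hb0 i) _
    linarith
  have h1 : ∑' j, b j ≤ 1 / 2 := (hbs.tsum_le_tsum hb1 hφ).trans hφ2
  have h2 : ‖h‖ ≤ ε / 12 * ∑' j, b j := by
    rw [← hyh.tsum_eq]
    refine tsum_of_norm_bounded (hbs.hasSum.mul_left (ε / 12)) fun j => ?_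
    rw [norm_smul]
    refine (mul_le_of_le_one_left (norm_nonneg _) (hy j)).trans (le_of_eq ?_)
    simp only [hb]; field_simp
  have h3 : ε / 12 * ∑' j, b j ≤ ε / 12 * (1 / 2) := by gcongr
  linarith

/-- Rescale finitely many terms of a `p`-summable sequence so that its `p`-sum is small. -/
theorem exists_rescale {p : ℝ} (hp0 : 0 < p) (a : ℕ → ℝ) (ha0 : ∀ j, 0 ≤ a j)
    (ha : Summable fun j => a j ^ p) :
    ∃ (J : ℕ) (δ : ℝ), 0 < δ ∧ (Summable fun j => ((if j < J then δ else 1) * a j) ^ p) ∧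
      ∑' j, ((if j < J then δ else 1) * a j) ^ p ≤ 1 / 2 := by
  have ht := tendsto_sum_nat_add (fun j => a j ^ p)
  obtain ⟨J, hJ⟩ := (ht.eventually (Iic_mem_nhds (show (0 : ℝ) < 1 / 4 by norm_num))).exists
  have hJ : ∑' k, a (k + J) ^ p ≤ 1 / 4 := hJ
  set G := ∑ j ∈ Finset.range J, a j ^ p with hG
  have hG0 : 0 ≤ G := Finset.sum_nonneg fun j _ => Real.rpow_nonneg (ha0 j) _
  have hq : 0 < 1 / (4 * (G + 1)) := by positivity
  refine ⟨J, (1 / (4 * (G + 1))) ^ (1 / p), Real.rpow_pos_of_pos hq _, ?_⟩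
  set δ := (1 / (4 * (G + 1))) ^ (1 / p) with hδ
  have hδ0 : 0 < δ := Real.rpow_pos_of_pos hq _
  have hδp : δ ^ p = 1 / (4 * (G + 1)) := by
    rw [hδ, ← Real.rpow_mul hq.le, one_div_mul_cancel hp0.ne', Real.rpow_one]
  have htail : ∀ k, ((if k + J < J then δ else 1) * a (k + J)) ^ p = a (k + J) ^ p := by
    intro k
    simp
  have hsum : Summable fun j => ((if j < J then δ else 1) * a j) ^ p := by
    rw [← summable_nat_add_iff J]
    simp only [htail]
    exact (summable_nat_add_iff J).2 ha
  refine ⟨hsum, ?_⟩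
  rw [← hsum.sum_add_tsum_nat_add J]
  simp only [htail]
  have h1 : ∑ j ∈ Finset.range J, ((if j < J then δ else 1) * a j) ^ p = δ ^ p * G := by
    rw [hG, Finset.mul_sum]
    refine Finset.sum_congr rfl fun j hj => ?_
    rw [if_pos (Finset.mem_range.1 hj), Real.mul_rpow hδ0.le (ha0 j)]
  have h2 : δ ^ p * G ≤ 1 / 4 := by
    rw [hδp, div_mul_eq_mul_div, div_le_div_iff₀ (by positivity) (by norm_num)]
    linarith
  rw [h1]
  linarith

/-- **Cohen-DeVore, Theorem 2.1.** Let `X, Y` be complex Banach spaces, `O ⊆ X` open,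
`u` holomorphic on `O` and uniformly bounded by `B`, and `K ⊆ O` compact.  Assume that for
some `0 < p < 1` there is a sequence `(ψ_j)_{j ≥ 1}` in `X` with `(‖ψ_j‖)_j ∈ ℓ_p(ℕ)` such
that `K ⊆ Q = {Σ_j z_j ψ_j : z ∈ U}`, `U` the unit polydisc of `ℓ_∞(ℕ)`.  Then
`Σ_{n ≥ 1} [n^t d_n(u(K))_Y]^p n^{-1} < ∞` where `t := 1/p - 1`.
(Sequences are indexed by `ℕ`, with index `j - 1 ∈ ℕ` corresponding to `j ≥ 1`;
the sum over `n ≥ 1` is written as a sum over `n + 1`, `n ∈ ℕ`.) -/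
theorem kolWidth_summability_of_lp_box
    {X Y : Type*} [NormedAddCommGroup X] [NormedSpace ℂ X] [CompleteSpace X]
    [NormedAddCommGroup Y] [NormedSpace ℂ Y] [CompleteSpace Y]
    (O : Set X) (hO : IsOpen O) (u : X → Y) (hu : DifferentiableOn ℂ u O)
    (B : ℝ) (hB : ∀ x ∈ O, ‖u x‖ ≤ B)
    (K : Set X) (hK : IsCompact K) (hKO : K ⊆ O)
    (p : ℝ) (hp0 : 0 < p) (hp1 : p < 1)
    (ψ : ℕ → X) (hψ : Summable fun j => ‖ψ j‖ ^ p)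
    (hKQ : ∀ x ∈ K, ∃ z : ℕ → ℂ, (∀ j, ‖z j‖ ≤ 1) ∧ HasSum (fun j => z j • ψ j) x) :
    Summable fun n : ℕ =>
      ((n + 1 : ℝ) ^ (1 / p - 1) * kolWidth (n + 1) (u '' K)) ^ p / (n + 1) := by
  classical
  obtain ⟨ε0, hε0, hthick⟩ := hK.exists_thickening_subset_open hO hKO
  set ε := ε0 / 2 with hεdef
  have hε : 0 < ε := by positivity
  have ha : Summable fun j => (12 / ε * ‖ψ j‖) ^ p := by
    have : (fun j => (12 / ε * ‖ψ j‖) ^ p) = fun j => (12 / ε) ^ p * ‖ψ j‖ ^ p := by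
      funext j
      rw [Real.mul_rpow (by positivity) (norm_nonneg _)]
    rw [this]
    exact hψ.mul_left _
  obtain ⟨J, δ, hδ, hs1, hs2⟩ := exists_rescale hp0 (fun j => 12 / ε * ‖ψ j‖)
    (fun j => by positivity) ha
  set d : ℕ → ℝ := fun j => if j < J then δ else 1 with hd
  have hd0 : ∀ j, 0 < d j := fun j => by
    simp only [hd]; split_ifs <;> simp [hδ]
  set φ : ℕ → X := fun j => (d j : ℂ) • ψ j with hφ
  have hφn : ∀ j, 12 / ε * ‖φ j‖ = (if j < J then δ else 1) * (12 / ε * ‖ψ j‖) := fun j => by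
    simp only [hφ, norm_smul, Complex.norm_real, Real.norm_of_nonneg (hd0 j).le]
    simp only [hd]
    ring
  have hφ1 : Summable fun j => (12 / ε * ‖φ j‖) ^ p := by simpa only [hφn] using hs1
  have hφ2 : ∑' j, (12 / ε * ‖φ j‖) ^ p ≤ 1 / 2 := by simpa only [hφn] using hs2
  -- a finite net of the finite dimensional polydisc
  obtain ⟨t, ht, hcov⟩ := Metric.totallyBounded_iff.1
    (isCompact_closedBall (0 : Fin J → ℂ) 1).totallyBounded δ hδ
  let W : (Fin J → ℂ) → ℕ → ℂ := fun w j => if h : j < J then w ⟨j, h⟩ else 0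
  let xc : (Fin J → ℂ) → X := fun w => ∑ j ∈ Finset.range J, W w j • ψ j
  have hxc : ∀ w, HasSum (fun j => W w j • ψ j) (xc w) := fun w => by
    refine hasSum_sum_of_ne_finset_zero fun j hj => ?_
    have : ¬ j < J := by simpa using hj
    simp [W, this]
  let t' : Set (Fin J → ℂ) := {w | w ∈ t ∧ Metric.ball (xc w) ε ⊆ O}
  have ht' : t'.Finite := ht.subset fun w hw => hw.1
  have : Finite t' := ht'
  have hloc := fun w : t' => local_box (f := u) (x := xc w) (B := B) hε (hu.mono w.2.2)
    (fun y hy => hB y (w.2.2 hy)) hp0 hp1 φ hφ1 hφ2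
  choose v hv1 hv2 using hloc
  refine width_summable' (ι := Σ _ : t', (Σ m : ℕ, Fin m → ℕ)) p hp0 hp1
    (fun q => v q.1 q.2) ?_ (u '' K) ?_
  · rw [summable_sigma_of_nonneg (fun q => Real.rpow_nonneg (norm_nonneg _) _)]
    exact ⟨fun w => hv1 w, Summable.of_finite⟩
  · rintro _ ⟨x, hx, rfl⟩
    obtain ⟨z, hz1, hz2⟩ := hKQ x hx
    have hzmem : (fun i : Fin J => z i) ∈ Metric.closedBall (0 : Fin J → ℂ) 1 := by
      rw [mem_closedBall_zero_iff, pi_norm_le_iff_of_nonneg zero_le_one]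
      exact fun i => hz1 i
    obtain ⟨w, hwt, hw⟩ := Set.mem_iUnion₂.1 (hcov hzmem)
    rw [Metric.mem_ball, dist_eq_norm] at hw
    let y : ℕ → ℂ := fun j => (z j - W w j) / (d j : ℂ)
    have hy1 : ∀ j, ‖y j‖ ≤ 1 := fun j => by
      simp only [y, norm_div, Complex.norm_real, Real.norm_of_nonneg (hd0 j).le]
      rw [div_le_one (hd0 j)]
      by_cases hj : j < J
      · have h1 := norm_le_pi_norm ((fun i : Fin J => z i) - w) ⟨j, hj⟩
        simp only [Pi.sub_apply] at h1
        simp only [W, hd, hj, dif_pos, if_true]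
        exact h1.trans hw.le
      · simpa [W, hd, hj] using hz1 j
    have hyh : HasSum (fun j => y j • φ j) (x - xc w) := by
      have h1 := hz2.sub (hxc w)
      refine h1.congr_fun fun j => ?_
      have hdj : (d j : ℂ) ≠ 0 := by exact_mod_cast (hd0 j).ne'
      simp only [y, hφ, smul_smul, div_mul_cancel₀ _ hdj, sub_smul]
    have hlt := box_norm_lt hε hp0 hp1 φ hφ1 hφ2 y hy1 _ hyh
    have hwt' : w ∈ t' := by
      refine ⟨hwt, fun q hq => hthick ?_⟩
      rw [Metric.mem_thickening_iff]
      refine ⟨x, hx, ?_⟩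
      rw [Metric.mem_ball] at hq
      have h1 := dist_triangle q (xc w) x
      rw [dist_comm (xc w) x, dist_eq_norm x] at h1
      linarith
    obtain ⟨c, hc1, hc2⟩ := hv2 ⟨w, hwt'⟩ y hy1 _ hyh
    rw [add_sub_cancel] at hc2
    refine ⟨fun q => if q.1 = ⟨w, hwt'⟩ then c q.2 else 0, fun q => ?_, ?_⟩
    · dsimp only
      split_ifs
      · exact hc1 _
      · simp
    · have hinj : Function.Injective (fun τ : (Σ m : ℕ, Fin m → ℕ) =>
          (⟨⟨w, hwt'⟩, τ⟩ : Σ _ : t', (Σ m : ℕ, Fin m → ℕ))) := by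
        intro a b hab
        simpa using hab
      rw [← hinj.hasSum_iff]
      · simpa [Function.comp_def] using hc2
      · rintro ⟨w2, τ⟩ hq
        have hne : w2 ≠ ⟨w, hwt'⟩ := by
          rintro rfl
          exact hq ⟨τ, rfl⟩
        simp [hne]
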